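/- arXiv:1407.4720 — 2 statements merged into one kernel-verified Lean document; each statement's English description precedes it below -/
import Mathlib

section
/- Fix an integer d > 1. For all sufficiently large n the following holds: for any set X of n positive integers, every antichain U in the partial order on d-element subsets of X (where B ≤ C if and only if the i-th smallest element of B is at most the i-th smallest element of C for every 1 ≤ i ≤ d) satisfies |U| < (2/√d)·(1/n)·C(n,d). -/
/-- The `i`-th smallest element of a finset of naturals (0-indexed; junk value `0` if
`i` is out of range). -/
def kthSmallest (B : Finset ℕ) (i : ℕ) : ℕ :=
  (B.sort (· ≤ ·)).getD i 0

/-- The partial order on `d`-element subsets: `B ≤ C` iff for each `i < d`, the `i`-th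
smallest element of `B` is at most the `i`-th smallest element of `C`. -/
def SubsetLE (d : ℕ) (B C : Finset ℕ) : Prop :=
  ∀ i < d, kthSmallest B i ≤ kthSmallest C i

/-- Antichains in `[m] × [n]^d` are bounded by any function satisfying the
Clebsch-Gordan type recursion. -/
theorem antichain_grid (n : ℕ) (F : ℕ → ℕ → ℝ) (P : ℕ → ℕ → Prop)
    (hP : ∀ m d k, P m (d + 1) → 1 ≤ m → k < min m n → P (m + n - 1 - 2 * k) d)
    (h0 : ∀ m, P m 0 → 1 ≤ m → F m 0 = 1)
    (hs : ∀ m d, P m (d + 1) → 1 ≤ m →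
      F m (d + 1) = ∑ k ∈ Finset.range (min m n), F (m + n - 1 - 2 * k) d)
    (d : ℕ) : ∀ (m : ℕ), 1 ≤ m → P m d → ∀ A : Finset (ℕ × (Fin d → ℕ)),
      (∀ p ∈ A, p.1 < m ∧ ∀ i, p.2 i < n) →
      (∀ p ∈ A, ∀ q ∈ A, p.1 ≤ q.1 → (∀ i, p.2 i ≤ q.2 i) → p = q) →
      (A.card : ℝ) ≤ F m d := by
  induction d with
  | zero =>
    intro m hm hPm A hA hanti
    rw [h0 m hPm hm]
    have : A.card ≤ 1 := by
      rw [Finset.card_le_one]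
      intro a ha b hb
      rcases le_total a.1 b.1 with h | h
      · exact hanti a ha b hb h (fun i => i.elim0)
      · exact (hanti b hb a ha h (fun i => i.elim0)).symm
    exact_mod_cast this
  | succ d ih =>
    intro m hm hPm A hA hanti
    rw [hs m d hPm hm]
    let key : ℕ × (Fin (d + 1) → ℕ) → ℕ := fun p => min p.1 (n - 1 - p.2 0)
    have hkey : ∀ p ∈ A, key p ∈ Finset.range (min m n) := by
      intro p hp
      have h1 := (hA p hp).1
      have h2 := (hA p hp).2 0
      simp only [key, Finset.mem_range]
      omega
    rw [Finset.card_eq_sum_card_fiberwise (f := key) (t := Finset.range (min m n)) hkey]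
    push_cast
    apply Finset.sum_le_sum
    intro k hk
    rw [Finset.mem_range] at hk
    let φ : ℕ × (Fin (d + 1) → ℕ) → ℕ × (Fin d → ℕ) :=
      fun p => (p.1 + p.2 0 - k, fun i => p.2 i.succ)
    have refl : ∀ p ∈ A.filter (fun p => key p = k), ∀ q ∈ A.filter (fun p => key p = k),
        (φ p).1 ≤ (φ q).1 → (∀ i, (φ p).2 i ≤ (φ q).2 i) → p = q := by
      intro p hp q hq h1 h2
      rw [Finset.mem_filter] at hp hq
      have hp1 := (hA p hp.1).1
      have hp2 := (hA p hp.1).2 0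
      have hq1 := (hA q hq.1).1
      have hq2 := (hA q hq.1).2 0
      have hpk := hp.2
      have hqk := hq.2
      simp only [key] at hpk hqk
      simp only [φ] at h1 h2
      refine hanti p hp.1 q hq.1 (by omega) ?_
      intro i
      refine Fin.cases ?_ (fun j => h2 j) i
      omega
    have hinj : Set.InjOn φ (A.filter (fun p => key p = k) : Finset _) := by
      intro p hp q hq h
      exact refl p hp q hq (by rw [h]) (fun i => by rw [h])
    rw [← Finset.card_image_of_injOn hinj]
    apply ih _ (by omega) (hP m d k hPm hm hk)
    · intro p hp
      obtain ⟨q, hq, rfl⟩ := Finset.mem_image.1 hp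
      rw [Finset.mem_filter] at hq
      have hq1 := (hA q hq.1).1
      have hq2 := (hA q hq.1).2 0
      have hqk := hq.2
      simp only [key] at hqk
      refine ⟨?_, fun i => (hA q hq.1).2 _⟩
      simp only [φ]
      omega
    · intro p hp q hq h1 h2
      obtain ⟨p', hp', rfl⟩ := Finset.mem_image.1 hp
      obtain ⟨q', hq', rfl⟩ := Finset.mem_image.1 hq
      rw [refl p' hp' q' hq' h1 h2]

theorem kth_eq (B : Finset ℕ) (d : ℕ) (h : B.card = d) (i : Fin d) :
    kthSmallest B i = B.orderEmbOfFin h i := by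
  rw [Finset.orderEmbOfFin_apply, kthSmallest, List.getD_eq_getElem]
  · rfl

theorem perm_sorted {d : ℕ} (a b : Fin d → ℕ) (ha : Monotone a) (hb : Monotone b)
    (ρ : Equiv.Perm (Fin d)) (h : ∀ i, a (ρ i) ≤ b i) (j : Fin d) : a j ≤ b j := by
  have : ∃ i, i ≤ j ∧ j ≤ ρ i := by
    by_contra hcon
    push Not at hcon
    have h1 : (Finset.Iic j).card ≤ (Finset.Iio j).card :=
      Finset.card_le_card_of_injOn ρ
        (fun i hi => by simpa using hcon i (by simpa using hi)) (ρ.injective.injOn)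
    simp at h1
  obtain ⟨i, h1, h2⟩ := this
  exact (ha h2).trans ((h i).trans (hb h1))

/-- From an antichain of `d`-subsets to an antichain of tuples. -/
theorem antichain_tuples (d n : ℕ) (X : Finset ℕ) (hX : X.card = n)
    (U : Finset (Finset ℕ)) (hU : U ⊆ X.powersetCard d)
    (hanti : IsAntichain (SubsetLE d) (U : Set (Finset ℕ))) :
    ∃ A : Finset (ℕ × (Fin d → ℕ)), A.card = U.card * d.factorial ∧
      (∀ p ∈ A, p.1 < 1 ∧ ∀ i, p.2 i < n) ∧
      (∀ p ∈ A, ∀ q ∈ A, p.1 ≤ q.1 → (∀ i, p.2 i ≤ q.2 i) → p = q) := by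
  classical
  let rk : ℕ → ℕ := fun x => (X.filter (· < x)).card
  have rk_lt : ∀ x ∈ X, rk x < n := by
    intro x hx
    rw [← hX]
    apply Finset.card_lt_card
    rw [Finset.ssubset_iff_of_subset (Finset.filter_subset _ _)]
    exact ⟨x, hx, by simp⟩
  have rk_mono : ∀ x ∈ X, ∀ y ∈ X, rk x ≤ rk y → x ≤ y := by
    intro x hx y hy h
    by_contra hlt
    push Not at hlt
    have : rk y < rk x := by
      apply Finset.card_lt_card
      rw [Finset.ssubset_iff_of_subset]
      · exact ⟨y, by simp [hy, hlt], by simp⟩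
      · intro z hz
        simp only [Finset.mem_filter] at hz ⊢
        exact ⟨hz.1, hz.2.trans hlt⟩
    omega
  have hcard : ∀ B ∈ U, B.card = d := fun B hB => (Finset.mem_powersetCard.1 (hU hB)).2
  have hsub : ∀ B ∈ U, B ⊆ X := fun B hB => (Finset.mem_powersetCard.1 (hU hB)).1
  have kmem : ∀ B ∈ U, ∀ i : Fin d, kthSmallest B i ∈ X := by
    intro B hB i
    rw [kth_eq B d (hcard B hB) i]
    exact hsub B hB (Finset.orderEmbOfFin_mem _ _ _)
  have kmono : ∀ B ∈ U, StrictMono (fun i : Fin d => kthSmallest B i) := by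
    intro B hB i j hij
    simp only
    rw [kth_eq B d (hcard B hB) i, kth_eq B d (hcard B hB) j]
    exact (B.orderEmbOfFin (hcard B hB)).strictMono hij
  let φ : Finset ℕ × Equiv.Perm (Fin d) → ℕ × (Fin d → ℕ) :=
    fun p => (0, fun i => rk (kthSmallest p.1 (p.2 i)))
  let S : Finset (Finset ℕ × Equiv.Perm (Fin d)) := U ×ˢ Finset.univ
  have key : ∀ p ∈ S, ∀ q ∈ S, (∀ i, (φ p).2 i ≤ (φ q).2 i) → p = q := by
    rintro ⟨B, σ⟩ hp ⟨C, τ⟩ hq h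
    have hB : B ∈ U := (Finset.mem_product.1 hp).1
    have hC : C ∈ U := (Finset.mem_product.1 hq).1
    have h' : ∀ i, kthSmallest B (σ i) ≤ kthSmallest C (τ i) := fun i =>
      rk_mono _ (kmem B hB _) _ (kmem C hC _) (h i)
    have hBC : B = C := by
      by_contra hne
      refine hanti hB hC hne ?_
      intro i hi
      exact perm_sorted (fun i : Fin d => kthSmallest B i) (fun i : Fin d => kthSmallest C i)
        (kmono B hB).monotone (kmono C hC).monotone (τ.symm.trans σ)
        (fun i => by simpa using h' (τ.symm i)) ⟨i, hi⟩
    subst hBC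
    have hsum : ∑ i, kthSmallest B (σ i) = ∑ i, kthSmallest B (τ i) := by
      rw [Equiv.sum_comp σ (fun i : Fin d => kthSmallest B i),
        Equiv.sum_comp τ (fun i : Fin d => kthSmallest B i)]
    have heq := (Finset.sum_eq_sum_iff_of_le (fun i _ => h' i)).1 hsum
    have : σ = τ := by
      ext i
      have := (kmono B hB).injective (heq i (Finset.mem_univ _))
      rw [this]
    rw [this]
  refine ⟨S.image φ, ?_, ?_, ?_⟩
  · rw [Finset.card_image_of_injOn]
    · simp [S, Fintype.card_perm]
    · intro p hp q hq h
      exact key p hp q hq (fun i => by rw [h])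
  · intro p hp
    obtain ⟨q, hq, rfl⟩ := Finset.mem_image.1 hp
    exact ⟨by simp [φ], fun i => rk_lt _ (kmem _ (Finset.mem_product.1 hq).1 _)⟩
  · intro p hp q hq _ h2
    obtain ⟨p', hp', rfl⟩ := Finset.mem_image.1 hp
    obtain ⟨q', hq', rfl⟩ := Finset.mem_image.1 hq
    rw [key p' hp' q' hq' h2]

/-- The `SU(2)` character of dimension `m`. -/
noncomputable def chiR (m : ℕ) (u : ℝ) : ℝ :=
  ∑ j ∈ Finset.range m, Real.cos (((m : ℝ) - 1 - 2 * j) * u)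

theorem chiR_cont (m : ℕ) : Continuous (chiR m) := by
  unfold chiR
  fun_prop

theorem chiR_mul_sin (m : ℕ) (u : ℝ) : chiR m u * Real.sin u = Real.sin (m * u) := by
  unfold chiR
  rw [Finset.sum_mul]
  have h : ∀ j ∈ Finset.range m, Real.cos (((m : ℝ) - 1 - 2 * j) * u) * Real.sin u =
      (fun j : ℕ => Real.sin (((m : ℝ) - 2 * j) * u) / 2) j -
      (fun j : ℕ => Real.sin (((m : ℝ) - 2 * j) * u) / 2) (j + 1) := by
    intro j _
    simp only
    have e1 : ((m : ℝ) - 2 * j) * u = ((m : ℝ) - 1 - 2 * j) * u + u := by ring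
    have e2 : ((m : ℝ) - 2 * (j + 1 : ℕ)) * u = ((m : ℝ) - 1 - 2 * j) * u - u := by
      push_cast; ring
    rw [e1, e2, Real.sin_add, Real.sin_sub]
    ring
  rw [Finset.sum_congr rfl h, Finset.sum_range_sub']
  have e3 : ((m : ℝ) - 2 * (m : ℕ)) * u = - (m * u) := by ring
  rw [e3, Real.sin_neg]
  simp
  ring

theorem int_congr {f g : ℝ → ℝ} (h : ∀ u, 0 < u → u < Real.pi → f u = g u) :
    ∫ u in (0 : ℝ)..Real.pi, f u = ∫ u in (0 : ℝ)..Real.pi, g u := by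
  rw [intervalIntegral.integral_of_le Real.pi_pos.le, intervalIntegral.integral_of_le Real.pi_pos.le,
    MeasureTheory.integral_Ioc_eq_integral_Ioo, MeasureTheory.integral_Ioc_eq_integral_Ioo]
  exact MeasureTheory.setIntegral_congr_fun measurableSet_Ioo (fun u hu => h u hu.1 hu.2)

theorem chiR_eq {u : ℝ} (h0 : 0 < u) (h1 : u < Real.pi) (m : ℕ) :
    chiR m u = Real.sin (m * u) / Real.sin u := by
  rw [eq_div_iff (Real.sin_pos_of_pos_of_lt_pi h0 h1).ne', chiR_mul_sin]

theorem chiR_int_odd (k : ℕ) : ∫ u in (0 : ℝ)..Real.pi, chiR (2 * k + 1) u = Real.pi := by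
  induction k with
  | zero => simp [chiR]
  | succ k ih =>
    have : ∫ u in (0 : ℝ)..Real.pi, chiR (2 * (k + 1) + 1) u =
        ∫ u in (0 : ℝ)..Real.pi, (chiR (2 * k + 1) u + 2 * Real.cos ((2 * k + 2 : ℝ) * u)) := by
      apply int_congr
      intro u h0 h1
      have hs := (Real.sin_pos_of_pos_of_lt_pi h0 h1).ne'
      rw [chiR_eq h0 h1, chiR_eq h0 h1]
      have e1 : ((2 * (k + 1) + 1 : ℕ) : ℝ) * u = (2 * k + 2 : ℝ) * u + u := by push_cast; ring
      have e2 : ((2 * k + 1 : ℕ) : ℝ) * u = (2 * k + 2 : ℝ) * u - u := by push_cast; ring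
      rw [e1, e2, Real.sin_add, Real.sin_sub]
      generalize (2 * k + 2 : ℝ) * u = v
      field_simp
      ring
    rw [this, intervalIntegral.integral_add, ih, intervalIntegral.integral_const_mul,
      intervalIntegral.integral_comp_mul_left _ (by positivity : (2 * k + 2 : ℝ) ≠ 0), integral_cos]
    · have : Real.sin ((2 * k + 2 : ℝ) * Real.pi) = 0 := by
        have := Real.sin_nat_mul_pi (2 * k + 2)
        push_cast at this
        exact this
      rw [this]; simp
    · exact (chiR_cont _).intervalIntegrable _ _
    · exact (by fun_prop : Continuous fun u : ℝ => 2 * Real.cos ((2 * k + 2 : ℝ) * u)).intervalIntegrable _ _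

theorem chiR_int_even (k : ℕ) :
    ∫ u in (0 : ℝ)..Real.pi, Real.cos u * chiR (2 * k + 2) u = Real.pi := by
  have : ∫ u in (0 : ℝ)..Real.pi, Real.cos u * chiR (2 * k + 2) u =
        ∫ u in (0 : ℝ)..Real.pi, (1 / 2) * (chiR (2 * k + 1) u + chiR (2 * (k + 1) + 1) u) := by
    apply int_congr
    intro u h0 h1
    have hs := (Real.sin_pos_of_pos_of_lt_pi h0 h1).ne'
    rw [chiR_eq h0 h1, chiR_eq h0 h1, chiR_eq h0 h1]
    rw [show ((2 * (k + 1) + 1 : ℕ) : ℝ) * u = ((2 * k + 2 : ℕ) : ℝ) * u + u by push_cast; ring,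
        show ((2 * k + 1 : ℕ) : ℝ) * u = ((2 * k + 2 : ℕ) : ℝ) * u - u by push_cast; ring,
        Real.sin_add, Real.sin_sub]
    ring
  rw [this, intervalIntegral.integral_const_mul, intervalIntegral.integral_add, chiR_int_odd,
    chiR_int_odd]
  · ring
  · exact (chiR_cont _).intervalIntegrable _ _
  · exact (chiR_cont _).intervalIntegrable _ _

theorem chiR_CG (m n : ℕ) (u : ℝ) (h0 : 0 < u) (h1 : u < Real.pi) :
    chiR m u * chiR n u = ∑ k ∈ Finset.range (min m n), chiR (m + n - 1 - 2 * k) u := by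
  have hs := (Real.sin_pos_of_pos_of_lt_pi h0 h1).ne'
  have h : ∀ k ∈ Finset.range (min m n), chiR (m + n - 1 - 2 * k) u * (Real.sin u * Real.sin u) =
      (fun k : ℕ => - Real.cos (((m : ℝ) + n - 2 * k) * u) / 2) k -
      (fun k : ℕ => - Real.cos (((m : ℝ) + n - 2 * k) * u) / 2) (k + 1) := by
    intro k hk
    rw [Finset.mem_range] at hk
    rw [← mul_assoc, chiR_mul_sin]
    have hc : ((m + n - 1 - 2 * k : ℕ) : ℝ) = (m : ℝ) + n - 1 - 2 * k := by
      rw [Nat.sub_sub, Nat.cast_sub (by omega)]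
      push_cast; ring
    simp only
    rw [hc, show ((m : ℝ) + n - 2 * k) * u = ((m : ℝ) + n - 1 - 2 * k) * u + u by ring,
      show ((m : ℝ) + n - 2 * (k + 1 : ℕ)) * u = ((m : ℝ) + n - 1 - 2 * k) * u - u by
        push_cast; ring, Real.cos_add, Real.cos_sub]
    ring
  have hss : Real.sin u * Real.sin u ≠ 0 := mul_ne_zero hs hs
  apply mul_right_cancel₀ hss
  rw [Finset.sum_mul, Finset.sum_congr rfl h, Finset.sum_range_sub']
  have e : chiR m u * chiR n u * (Real.sin u * Real.sin u) =
      (chiR m u * Real.sin u) * (chiR n u * Real.sin u) := by ring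
  rw [e, chiR_mul_sin, chiR_mul_sin]
  rcases le_total m n with hmn | hmn
  · rw [min_eq_left hmn, show ((m : ℝ) + n - 2 * (m : ℕ)) * u = n * u - m * u by ring,
      show ((m : ℝ) + n - 2 * (0 : ℕ)) * u = n * u + m * u by push_cast; ring,
      Real.cos_add, Real.cos_sub]
    ring
  · rw [min_eq_right hmn, show ((m : ℝ) + n - 2 * (n : ℕ)) * u = m * u - n * u by ring,
      show ((m : ℝ) + n - 2 * (0 : ℕ)) * u = n * u + m * u by push_cast; ring,
      Real.cos_add, Real.cos_sub]
    ring

/-- The width bound as an integral. -/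
noncomputable def Fint (p n m d : ℕ) : ℝ :=
  (1 / Real.pi) * ∫ u in (0 : ℝ)..Real.pi, Real.cos u ^ p * chiR m u * chiR n u ^ d

theorem Fint_zero (p n m : ℕ) (hp : p ≤ 1) (hP : Even (m + 1 + p)) (hm : 1 ≤ m) :
    Fint p n m 0 = 1 := by
  have : ∫ u in (0 : ℝ)..Real.pi, Real.cos u ^ p * chiR m u * chiR n u ^ 0 = Real.pi := by
    interval_cases p
    · obtain ⟨k, hk⟩ := hP
      obtain ⟨k, rfl⟩ : ∃ k', m = 2 * k' + 1 := ⟨k - 1, by omega⟩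
      simpa using chiR_int_odd k
    · obtain ⟨k, hk⟩ := hP
      obtain ⟨k, rfl⟩ : ∃ k', m = 2 * k' + 2 := ⟨k - 2, by omega⟩
      simpa using chiR_int_even k
  rw [Fint, this]
  field_simp

theorem Fint_succ (p n m d : ℕ) :
    Fint p n m (d + 1) = ∑ k ∈ Finset.range (min m n), Fint p n (m + n - 1 - 2 * k) d := by
  unfold Fint
  rw [← Finset.mul_sum, ← intervalIntegral.integral_finsetSum]
  · congr 1
    apply int_congr
    intro u h0 h1
    rw [← Finset.sum_mul, ← Finset.mul_sum, ← chiR_CG m n u h0 h1]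
    ring
  · intro k _
    apply Continuous.intervalIntegrable
    have := chiR_cont n
    have := chiR_cont (m + n - 1 - 2 * k)
    fun_prop

theorem Fint_le (p n d : ℕ) :
    Fint p n 1 d ≤ (2 / Real.pi) * ∫ u in (0 : ℝ)..(Real.pi / 2), |chiR n u| ^ d := by
  have hc := chiR_cont n
  have hIntv : ∀ a b : ℝ, IntervalIntegrable (fun u => |chiR n u| ^ d) MeasureTheory.volume a b :=
    fun a b => (by fun_prop : Continuous fun u => |chiR n u| ^ d).intervalIntegrable _ _
  have h1 : ∫ u in (0 : ℝ)..Real.pi, Real.cos u ^ p * chiR 1 u * chiR n u ^ d ≤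
      ∫ u in (0 : ℝ)..Real.pi, |chiR n u| ^ d := by
    apply intervalIntegral.integral_mono_on Real.pi_pos.le
    · have := chiR_cont 1
      exact (by fun_prop : Continuous fun u => Real.cos u ^ p * chiR 1 u * chiR n u ^ d).intervalIntegrable _ _
    · exact hIntv _ _
    · intro u _
      have : chiR 1 u = 1 := by simp [chiR]
      rw [this, mul_one]
      refine (le_abs_self _).trans ?_
      rw [abs_mul, abs_pow, abs_pow]
      have : |Real.cos u| ^ p ≤ 1 := pow_le_one₀ (abs_nonneg _) (Real.abs_cos_le_one u)
      exact mul_le_of_le_one_left (by positivity) this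
  have h2 : ∫ u in (Real.pi / 2)..Real.pi, |chiR n u| ^ d =
      ∫ u in (0 : ℝ)..(Real.pi / 2), |chiR n u| ^ d := by
    have := intervalIntegral.integral_comp_sub_left (a := 0) (b := Real.pi / 2)
      (fun u => |chiR n u| ^ d) Real.pi
    rw [show Real.pi - Real.pi / 2 = Real.pi / 2 by ring, sub_zero] at this
    rw [← this]
    have : ∀ u, |chiR n (Real.pi - u)| = |chiR n u| := by
      intro u
      have : chiR n (Real.pi - u) = Real.cos (((n : ℝ) - 1) * Real.pi) * chiR n u := by
        unfold chiR
        rw [Finset.mul_sum]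
        apply Finset.sum_congr rfl
        intro j _
        have hsin : Real.sin (((n : ℝ) - 1) * Real.pi) = 0 := by
          have := Real.sin_int_mul_pi ((n : ℤ) - 1)
          push_cast at this
          exact this
        rw [show ((n : ℝ) - 1 - 2 * j) * (Real.pi - u) =
          (((n : ℝ) - 1) * Real.pi - ((n : ℝ) - 1 - 2 * j) * u) - j * (2 * Real.pi) by ring,
          Real.cos_sub_nat_mul_two_pi, Real.cos_sub, hsin]
        ring
      rw [this, abs_mul]
      have : |Real.cos (((n : ℝ) - 1) * Real.pi)| = 1 := by
        have := Real.abs_cos_int_mul_pi ((n : ℤ) - 1)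
        push_cast at this
        exact this
      rw [this, one_mul]
    simp only [this]
  rw [← intervalIntegral.integral_add_adjacent_intervals (hIntv 0 (Real.pi / 2)) (hIntv _ _), h2] at h1
  unfold Fint
  have hpi := Real.pi_pos
  calc _ ≤ 1 / Real.pi * _ := mul_le_mul_of_nonneg_left h1 (by positivity)
    _ = _ := by ring

theorem cos_le_exp {y : ℝ} (h0 : 0 ≤ y) (h1 : y ≤ Real.pi / 2) :
    Real.cos y ≤ Real.exp (-(y ^ 2 / 2)) := by
  have hanti : AntitoneOn (fun y : ℝ => Real.cos y * Real.exp (y ^ 2 / 2))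
      (Set.Icc 0 (Real.pi / 2)) := by
    have hd : ∀ x : ℝ, HasDerivAt (fun y : ℝ => Real.cos y * Real.exp (y ^ 2 / 2))
        (-Real.sin x * Real.exp (x ^ 2 / 2) + Real.cos x * (Real.exp (x ^ 2 / 2) * x)) x := by
      intro x
      have h2 : HasDerivAt (fun y : ℝ => y ^ 2 / 2) x x := by
        have := (hasDerivAt_pow 2 x).div_const 2
        simpa using this
      exact (Real.hasDerivAt_cos x).mul h2.exp
    apply antitoneOn_of_deriv_nonpos (convex_Icc _ _)
    · fun_prop
    · fun_prop
    · intro x hx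
      rw [interior_Icc] at hx
      rw [(hd x).deriv]
      have hcos := Real.cos_pos_of_mem_Ioo ⟨by linarith [hx.1, Real.pi_pos], hx.2⟩
      have ht := Real.lt_tan hx.1 hx.2
      rw [Real.tan_eq_sin_div_cos, lt_div_iff₀ hcos] at ht
      nlinarith [Real.exp_pos (x ^ 2 / 2)]
  have := hanti (Set.left_mem_Icc.2 (by positivity)) ⟨h0, h1⟩ h0
  simp only [Real.cos_zero] at this
  rw [Real.exp_neg, ← one_div, le_div_iff₀ (Real.exp_pos _)]
  simpa using this

theorem sin_le_exp {x : ℝ} (h0 : 0 ≤ x) (h1 : x ≤ Real.pi) :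
    Real.sin x ≤ x * Real.exp (-(x ^ 2 / 8)) := by
  have h2 : Real.sin x = 2 * Real.sin (x / 2) * Real.cos (x / 2) := by
    rw [← Real.sin_two_mul]; ring_nf
  have h3 := cos_le_exp (y := x / 2) (by linarith) (by linarith)
  have h4 := Real.sin_le (x := x / 2) (by linarith)
  have h5 : 0 ≤ Real.cos (x / 2) :=
    Real.cos_nonneg_of_mem_Icc ⟨by linarith [Real.pi_pos], by linarith⟩
  rw [show (x / 2) ^ 2 / 2 = x ^ 2 / 8 by ring] at h3
  rw [h2]
  calc _ ≤ x * Real.cos (x / 2) := by nlinarith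
    _ ≤ _ := by gcongr

theorem int_bound (n e : ℕ) (hn : 4 ≤ n) (K : ℝ)
    (hK : K = 1 / (1 - (Real.pi / n) ^ 2 / 4)) :
    (2 / Real.pi) * ∫ u in (0 : ℝ)..(Real.pi / 2), |chiR n u| ^ (e + 2) ≤
      (n : ℝ) ^ (e + 1) * K ^ (e + 2) *
        (√(8 / Real.pi) / √((e + 2 : ℕ) : ℝ) + 2 / Real.pi ^ (e + 2)) := by
  have hpi := Real.pi_pos
  have hn' : (4 : ℝ) ≤ n := by exact_mod_cast hn
  have hn0 : (0 : ℝ) < n := by linarith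
  set a := Real.pi / n with ha
  have ha0 : 0 < a := by positivity
  have ha1 : a ≤ 1 := by
    rw [ha, div_le_one hn0]; linarith [Real.pi_le_four]
  have ha2 : a ≤ Real.pi / 2 := by linarith [Real.pi_gt_three]
  have hden : 0 < 1 - a ^ 2 / 4 := by nlinarith
  have hK0 : 0 < K := by rw [hK]; positivity
  have hK1 : 1 ≤ K := by
    rw [hK, le_div_iff₀ hden]; nlinarith
  have hsin : ∀ u, 0 < u → u ≤ a → 1 / Real.sin u ≤ K / u := by
    intro u hu hua
    have h1 := Real.sin_gt_sub_cube hu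
    have h2 : u * (1 - a ^ 2 / 4) ≤ Real.sin u := by
      have h3 : u ^ 2 ≤ a ^ 2 := by gcongr
      have h4 : u * u ^ 2 ≤ u * a ^ 2 := by gcongr
      have h5 : 0 ≤ u * u ^ 2 := by positivity
      nlinarith
    rw [hK, div_div, mul_comm]
    exact one_div_le_one_div_of_le (by positivity) h2
  have hsinpos : ∀ u, 0 < u → u ≤ Real.pi / 2 → 0 < Real.sin u := fun u h1 h2 =>
    Real.sin_pos_of_pos_of_lt_pi h1 (by linarith)
  have hc := chiR_cont n
  have hIntv : ∀ a b : ℝ, IntervalIntegrable (fun u => |chiR n u| ^ (e + 2))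
      MeasureTheory.volume a b :=
    fun a b => (by fun_prop : Continuous fun u => |chiR n u| ^ (e + 2)).intervalIntegrable _ _
  -- main part
  have hA : ∫ u in (0 : ℝ)..a, |chiR n u| ^ (e + 2) ≤
      (n * K) ^ (e + 2) * (√(Real.pi / (((e + 2 : ℕ) : ℝ) * n ^ 2 / 8)) / 2) := by
    set b : ℝ := ((e + 2 : ℕ) : ℝ) * n ^ 2 / 8 with hb
    have hb0 : 0 < b := by positivity
    have hcont : Continuous fun u : ℝ => (n * K) ^ (e + 2) * Real.exp (-b * u ^ 2) := by fun_prop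
    have h1 : ∫ u in (0 : ℝ)..a, |chiR n u| ^ (e + 2) ≤
        ∫ u in (0 : ℝ)..a, (n * K) ^ (e + 2) * Real.exp (-b * u ^ 2) := by
      apply intervalIntegral.integral_mono_on_of_le_Ioo ha0.le (hIntv _ _)
        (hcont.intervalIntegrable _ _)
      intro u hu
      have hnu : n * u ≤ Real.pi := by
        have := hu.2.le
        rw [ha, le_div_iff₀ hn0] at this
        linarith
      have hs := hsinpos u hu.1 (hu.2.le.trans ha2)
      rw [chiR_eq hu.1 (by linarith [hu.2])]
      have h2 := sin_le_exp (x := n * u) (by have := hu.1; positivity) hnu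
      have h3 : 0 ≤ Real.sin (n * u) :=
        Real.sin_nonneg_of_nonneg_of_le_pi (by have := hu.1; positivity) hnu
      rw [abs_of_nonneg (by positivity)]
      have h4 : Real.sin (n * u) / Real.sin u ≤ n * K * Real.exp (-((n * u) ^ 2 / 8)) := by
        calc Real.sin (n * u) / Real.sin u = Real.sin (n * u) * (1 / Real.sin u) := by ring
          _ ≤ (n * u * Real.exp (-((n * u) ^ 2 / 8))) * (K / u) := by
            apply mul_le_mul h2 (hsin u hu.1 hu.2.le) (by positivity)
            have := hu.1
            positivity
          _ = _ := by have := hu.1.ne'; field_simp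
      calc (Real.sin (n * u) / Real.sin u) ^ (e + 2)
          ≤ (n * K * Real.exp (-((n * u) ^ 2 / 8))) ^ (e + 2) := by gcongr
        _ = _ := by
          rw [mul_pow, ← Real.exp_nat_mul]
          congr 2
          rw [hb]
          ring
    refine h1.trans ?_
    rw [intervalIntegral.integral_const_mul, ← integral_gaussian_Ioi,
      intervalIntegral.integral_of_le ha0.le]
    apply mul_le_mul_of_nonneg_left _ (by positivity)
    apply MeasureTheory.setIntegral_mono_set
    · exact (integrable_exp_neg_mul_sq hb0).integrableOn
    · exact Filter.Eventually.of_forall (fun u => (Real.exp_pos _).le)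
    · exact Filter.Eventually.of_forall (fun u hu => hu.1)
  -- tail
  have hB : ∫ u in a..(Real.pi / 2), |chiR n u| ^ (e + 2) ≤ (K * n / Real.pi) ^ (e + 1) := by
    have hsa := hsinpos a ha0 ha2
    have hci : IntervalIntegrable (fun u => (1 / Real.sin a) ^ e * (1 / Real.sin u ^ 2))
        MeasureTheory.volume a (Real.pi / 2) := by
      apply ContinuousOn.intervalIntegrable
      rw [Set.uIcc_of_le ha2]
      apply ContinuousOn.mul continuousOn_const
      apply ContinuousOn.div continuousOn_const (by fun_prop)
      intro u hu
      exact pow_ne_zero _ (hsinpos u (ha0.trans_le hu.1) hu.2).ne'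
    have h1 : ∫ u in a..(Real.pi / 2), |chiR n u| ^ (e + 2) ≤
        ∫ u in a..(Real.pi / 2), (1 / Real.sin a) ^ e * (1 / Real.sin u ^ 2) := by
      apply intervalIntegral.integral_mono_on ha2 (hIntv _ _) hci
      intro u hu
      have hu0 : 0 < u := ha0.trans_le hu.1
      have hs := hsinpos u hu0 hu.2
      rw [chiR_eq hu0 (by linarith [hu.2]), abs_div, abs_of_pos hs]
      have h2 : |Real.sin (n * u)| / Real.sin u ≤ 1 / Real.sin u := by
        gcongr
        exact Real.abs_sin_le_one _
      have h3 : Real.sin a ≤ Real.sin u :=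
        Real.sin_le_sin_of_le_of_le_pi_div_two (by linarith) hu.2 hu.1
      calc (|Real.sin (n * u)| / Real.sin u) ^ (e + 2) ≤ (1 / Real.sin u) ^ (e + 2) := by gcongr
        _ = (1 / Real.sin u) ^ e * (1 / Real.sin u ^ 2) := by
          rw [pow_add]; congr 1; rw [one_div_pow]
        _ ≤ _ := by gcongr
    have h2 : ∫ u in a..(Real.pi / 2), (1 / Real.sin u ^ 2) = Real.cos a / Real.sin a := by
      have := intervalIntegral.integral_eq_sub_of_hasDerivAt (a := a) (b := Real.pi / 2)
        (f := fun u => - (Real.cos u / Real.sin u)) (f' := fun u => 1 / Real.sin u ^ 2) ?_ ?_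
      · rw [this]; simp
      · intro u hu
        rw [Set.uIcc_of_le ha2] at hu
        have hs := (hsinpos u (ha0.trans_le hu.1) hu.2).ne'
        have := ((Real.hasDerivAt_cos u).div (Real.hasDerivAt_sin u) hs).neg
        convert! this using 1
        field_simp
        nlinarith [Real.sin_sq_add_cos_sq u]
      · apply ContinuousOn.intervalIntegrable
        rw [Set.uIcc_of_le ha2]
        apply ContinuousOn.div continuousOn_const (by fun_prop)
        intro u hu
        exact pow_ne_zero _ (hsinpos u (ha0.trans_le hu.1) hu.2).ne'
    rw [intervalIntegral.integral_const_mul, h2] at h1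
    refine h1.trans ?_
    calc (1 / Real.sin a) ^ e * (Real.cos a / Real.sin a)
        ≤ (1 / Real.sin a) ^ e * (1 / Real.sin a) := by
          gcongr
          exact Real.cos_le_one a
      _ = (1 / Real.sin a) ^ (e + 1) := by rw [pow_succ]
      _ ≤ (K / a) ^ (e + 1) := by
        have := hsin a ha0 le_rfl
        gcongr
      _ = _ := by rw [ha, div_div_eq_mul_div]
  rw [← intervalIntegral.integral_add_adjacent_intervals (hIntv 0 a) (hIntv _ _)]
  have hsq : √(Real.pi / (((e + 2 : ℕ) : ℝ) * n ^ 2 / 8)) / 2 * (2 / Real.pi) * n =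
      √(8 / Real.pi) / √((e + 2 : ℕ) : ℝ) := by
    have : Real.pi / (((e + 2 : ℕ) : ℝ) * n ^ 2 / 8) =
        (8 / Real.pi) / ((e + 2 : ℕ) : ℝ) * (Real.pi / n) ^ 2 := by
      field_simp
    rw [this, Real.sqrt_mul (by positivity), Real.sqrt_sq (by positivity),
      Real.sqrt_div (by positivity)]
    field_simp
  have hB' : (K * n / Real.pi) ^ (e + 1) ≤
      (n : ℝ) ^ (e + 1) * K ^ (e + 2) * (1 / Real.pi ^ (e + 1)) := by
    rw [div_pow, mul_pow]
    have : K ^ (e + 1) ≤ K ^ (e + 2) := pow_le_pow_right₀ hK1 (by omega)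
    rw [div_eq_mul_one_div]
    gcongr ?_ * _
    rw [mul_comm]
    gcongr
  calc _ ≤ (2 / Real.pi) * ((n * K) ^ (e + 2) *
        (√(Real.pi / (((e + 2 : ℕ) : ℝ) * n ^ 2 / 8)) / 2) +
        (n : ℝ) ^ (e + 1) * K ^ (e + 2) * (1 / Real.pi ^ (e + 1))) := by
        gcongr
        exact hB.trans hB'
    _ = _ := by
      rw [← hsq]
      field_simp
      ring

theorem const_lt (d : ℕ) (hd : 2 ≤ d) :
    √(8 / Real.pi) / √(d : ℝ) + 2 / Real.pi ^ d < 2 / √(d : ℝ) := by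
  have hpi := Real.pi_gt_d2
  have hd0 : (0 : ℝ) < d := by exact_mod_cast (by omega : 0 < d)
  have hs0 : 0 < √(d : ℝ) := Real.sqrt_pos.2 hd0
  have h1 : √(8 / Real.pi) < 1.6 := by
    rw [Real.sqrt_lt' (by norm_num), div_lt_iff₀ Real.pi_pos]
    nlinarith
  have h2 : ∀ d : ℕ, 2 ≤ d → (25 : ℝ) * d < 9 ^ d := by
    intro d hd
    induction d, hd using Nat.le_induction with
    | base => norm_num
    | succ k hk ih =>
      have : (2 : ℝ) ≤ k := by exact_mod_cast hk
      rw [pow_succ]; push_cast; linarith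
  have h3 : 5 * √(d : ℝ) < Real.pi ^ d := by
    apply lt_of_pow_lt_pow_left₀ 2 (by positivity)
    rw [mul_pow, Real.sq_sqrt hd0.le]
    calc (5 : ℝ) ^ 2 * d = 25 * d := by norm_num
      _ < 9 ^ d := h2 d hd
      _ = (3 ^ d) ^ 2 := by rw [← pow_mul, mul_comm, pow_mul]; norm_num
      _ ≤ (Real.pi ^ d) ^ 2 := by gcongr; linarith
  have h4 : 2 / Real.pi ^ d < 0.4 / √(d : ℝ) := by
    rw [div_lt_div_iff₀ (by positivity) hs0]
    linarith
  have h5 : √(8 / Real.pi) / √(d : ℝ) < 1.6 / √(d : ℝ) := by gcongr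
  calc _ < 1.6 / √(d : ℝ) + 0.4 / √(d : ℝ) := add_lt_add h5 h4
    _ = _ := by rw [← add_div]; norm_num

theorem card_bound (d n : ℕ) (hn : 1 ≤ n) (X : Finset ℕ) (hX : X.card = n)
    (U : Finset (Finset ℕ)) (hU : U ⊆ X.powersetCard d)
    (hanti : IsAntichain (SubsetLE d) (U : Set (Finset ℕ))) :
    (U.card : ℝ) * d.factorial ≤
      (2 / Real.pi) * ∫ u in (0 : ℝ)..(Real.pi / 2), |chiR n u| ^ d := by
  obtain ⟨A, hcard, h1, h2⟩ := antichain_tuples d n X hX U hU hanti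
  obtain ⟨p, hp, hpar⟩ : ∃ p, p ≤ 1 ∧ Even (1 + d * (n - 1) + 1 + p) := by
    rcases Nat.even_or_odd (1 + d * (n - 1) + 1) with h | h
    · exact ⟨0, by norm_num, by simpa using h⟩
    · exact ⟨1, le_rfl, h.add_one⟩
  have := antichain_grid n (fun m d => Fint p n m d)
    (fun m d => Even (m + d * (n - 1) + 1 + p))
    (by
      intro m d k h hm hk
      rw [Nat.even_iff] at h ⊢
      rw [add_mul, one_mul] at h
      generalize d * (n - 1) = t at *
      omega)
    (by
      intro m h hm
      exact Fint_zero p n m hp (by simpa using h) hm)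
    (fun m d _ _ => Fint_succ p n m d) d 1 le_rfl hpar A h1 h2
  rw [hcard] at this
  push_cast at this
  exact this.trans (Fint_le p n d)

theorem eventually_bound (d : ℕ) (hd : 2 ≤ d) : ∀ᶠ n : ℕ in Filter.atTop,
    (1 / (1 - (Real.pi / n) ^ 2 / 4)) ^ d * (√(8 / Real.pi) / √(d : ℝ) + 2 / Real.pi ^ d) <
      2 / √(d : ℝ) * ((n.descFactorial d : ℝ) / (n : ℝ) ^ d) := by
  have h1 : Filter.Tendsto (fun n : ℕ => (1 / (1 - (Real.pi / n) ^ 2 / 4)) ^ d *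
      (√(8 / Real.pi) / √(d : ℝ) + 2 / Real.pi ^ d)) Filter.atTop
      (nhds ((1 / (1 - (0 : ℝ) ^ 2 / 4)) ^ d *
        (√(8 / Real.pi) / √(d : ℝ) + 2 / Real.pi ^ d))) := by
    have h0 : Filter.Tendsto (fun n : ℕ => Real.pi / (n : ℝ)) Filter.atTop (nhds 0) :=
      tendsto_const_div_atTop_nhds_zero_nat _
    refine Filter.Tendsto.mul_const _ (Filter.Tendsto.pow ?_ _)
    exact (tendsto_const_nhds.div (tendsto_const_nhds.sub ((h0.pow 2).div_const 4)) (by norm_num))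
  have h2 : Filter.Tendsto (fun n : ℕ => 2 / √(d : ℝ) *
      ((n.descFactorial d : ℝ) / (n : ℝ) ^ d)) Filter.atTop (nhds (2 / √(d : ℝ) * 1)) := by
    refine Filter.Tendsto.const_mul _ ?_
    have := isEquivalent_descFactorial d
    rw [Asymptotics.isEquivalent_iff_tendsto_one] at this
    · exact this
    · filter_upwards [Filter.eventually_ge_atTop 1] with n hn
      have : (0 : ℝ) < n := by exact_mod_cast hn
      positivity
  refine h1.eventually_lt h2 ?_
  simpa using const_lt d hd



/-- **Lemma 2.** Fix `d > 1`. For all sufficiently large `n`: for any set `X` of `n`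
positive integers, every antichain `U` in the partial order on `d`-element subsets of `X`
satisfies `|U| < (2/√d) · (1/n) · C(n, d)`. -/
theorem subset_antichain_small (d : ℕ) (hd : 1 < d) :
    ∃ N : ℕ, ∀ n : ℕ, N ≤ n →
      ∀ X : Finset ℕ, (∀ x ∈ X, 0 < x) → X.card = n →
        ∀ U : Finset (Finset ℕ), U ⊆ X.powersetCard d →
          IsAntichain (SubsetLE d) (U : Set (Finset ℕ)) →
          (U.card : ℝ) < 2 / Real.sqrt d * (1 / n) * (n.choose d) := by
  obtain ⟨N, hN⟩ := Filter.eventually_atTop.1 (eventually_bound d hd)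
  refine ⟨max N 4, ?_⟩
  intro n hn X _ hX U hU hanti
  have hn4 : 4 ≤ n := (le_max_right _ _).trans hn
  have hlt := hN n ((le_max_left _ _).trans hn)
  have hcb := card_bound d n (by omega) X hX U hU hanti
  obtain ⟨e, rfl⟩ : ∃ e, d = e + 2 := ⟨d - 2, by omega⟩
  have hib := int_bound n e hn4 _ rfl
  have hn0 : (0 : ℝ) < n := by exact_mod_cast (by omega : 0 < n)
  have hf0 : (0 : ℝ) < (e + 2).factorial := by exact_mod_cast Nat.factorial_pos _
  apply lt_of_mul_lt_mul_right _ hf0.le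
  refine (hcb.trans hib).trans_lt ?_
  have hdf : (n.descFactorial (e + 2) : ℝ) = (e + 2).factorial * n.choose (e + 2) := by
    exact_mod_cast Nat.descFactorial_eq_factorial_mul_choose n (e + 2)
  rw [mul_assoc]
  calc _ < (n : ℝ) ^ (e + 1) * _ := mul_lt_mul_of_pos_left hlt (by positivity)
    _ = _ := by
      rw [hdf]
      field_simp
      ring
end

section
/- Fix positive integers k, m, a, b. Then there exists a constant C > 0 such that for every positive integer n with gcd(m,n) = 1, the number of pairs of positive integers (x,y) with gcd(a,x) = 1, gcd(b,y) = 1, and m/n = a/x + b/y is at most C·n^{1/k}. -/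
theorem aux_pow_bound (j : ℕ) (hj : 0 < j) (e : ℕ) : (e + 1) ^ j ≤ j ^ j * 2 ^ e := by
  have h1 : e + 1 ≤ j * (e / j + 1) := by
    have := Nat.lt_mul_div_succ e hj
    omega
  have h2 : e / j + 1 ≤ 2 ^ (e / j) := Nat.lt_two_pow_self
  calc (e + 1) ^ j ≤ (j * 2 ^ (e / j)) ^ j :=
        Nat.pow_le_pow_left (h1.trans (Nat.mul_le_mul_left _ h2)) _
    _ = j ^ j * 2 ^ (e / j * j) := by rw [mul_pow, pow_mul]
    _ ≤ j ^ j * 2 ^ e :=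
        Nat.mul_le_mul_left _ (Nat.pow_le_pow_right (by norm_num) (Nat.div_mul_le_self e j))

theorem aux_divisor_bound (j : ℕ) (hj : 0 < j) (N : ℕ) (hN : N ≠ 0) :
    (N.divisors.card) ^ j ≤ (j ^ j) ^ (2 ^ j) * N := by
  have hK : 1 ≤ j ^ j := Nat.one_le_pow _ _ hj
  have key : ∏ p ∈ N.primeFactors, (N.factorization p + 1) ^ j ≤
      ∏ p ∈ N.primeFactors, ((if p < 2 ^ j then j ^ j else 1) * p ^ (N.factorization p)) := by
    apply Finset.prod_le_prod' 
    intro p hp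
    have hp2 : 2 ≤ p := (Nat.prime_of_mem_primeFactors hp).two_le
    split_ifs with h
    · exact (aux_pow_bound j hj _).trans
        (Nat.mul_le_mul_left _ (Nat.pow_le_pow_left hp2 _))
    · rw [one_mul]
      calc (N.factorization p + 1) ^ j ≤ (2 ^ N.factorization p) ^ j :=
            Nat.pow_le_pow_left Nat.lt_two_pow_self _
        _ = (2 ^ j) ^ N.factorization p := by rw [← pow_mul, ← pow_mul, mul_comm]
        _ ≤ _ := Nat.pow_le_pow_left (not_lt.mp h) _
  have hprod : ∏ p ∈ N.primeFactors, p ^ (N.factorization p) = N :=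
    Nat.prod_factorization_pow_eq_self hN
  rw [Nat.card_divisors hN, ← Finset.prod_pow]
  refine key.trans ?_
  rw [Finset.prod_mul_distrib, hprod]
  apply Nat.mul_le_mul_right
  rw [Finset.prod_ite]
  simp only [Finset.prod_const, one_pow, mul_one]
  apply Nat.pow_le_pow_right hK
  calc _ ≤ (Finset.range (2 ^ j)).card := by
        apply Finset.card_le_card
        intro p hp
        simp at hp ⊢
        exact hp.2
    _ = 2 ^ j := Finset.card_range _

/-- **Lemma 4.** Fix positive integers `k, m, a, b`. Then there is `C > 0` such that for
every positive integer `n` with `gcd(m, n) = 1`, the set of pairs of positive integers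
`(x, y)` with `gcd(a, x) = 1`, `gcd(b, y) = 1` and `m/n = a/x + b/y` is finite of size at
most `C · n^(1/k)`. -/
theorem unit_fraction_pairs_bound (k m a b : ℕ)
    (hk : 0 < k) (hm : 0 < m) (ha : 0 < a) (hb : 0 < b) :
    ∃ C : ℝ, 0 < C ∧ ∀ n : ℕ, 0 < n → Nat.gcd m n = 1 →
      {p : ℕ × ℕ | 0 < p.1 ∧ 0 < p.2 ∧ Nat.gcd a p.1 = 1 ∧ Nat.gcd b p.2 = 1 ∧
          (m : ℚ) / n = (a : ℚ) / p.1 + (b : ℚ) / p.2}.Finite ∧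
      (({p : ℕ × ℕ | 0 < p.1 ∧ 0 < p.2 ∧ Nat.gcd a p.1 = 1 ∧ Nat.gcd b p.2 = 1 ∧
          (m : ℚ) / n = (a : ℚ) / p.1 + (b : ℚ) / p.2}.ncard : ℝ)
        ≤ C * (n : ℝ) ^ ((1 : ℝ) / k)) := by
  have hj : 0 < 2 * k := by omega
  set D : ℕ := ((2 * k) ^ (2 * k)) ^ (2 ^ (2 * k)) * (a * b) with hD
  have hDpos : 0 < D := by positivity
  refine ⟨(D : ℝ) ^ ((1 : ℝ) / (2 * k)), by positivity, fun n hn _ => ?_⟩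
  set S := {p : ℕ × ℕ | 0 < p.1 ∧ 0 < p.2 ∧ Nat.gcd a p.1 = 1 ∧ Nat.gcd b p.2 = 1 ∧
          (m : ℚ) / n = (a : ℚ) / p.1 + (b : ℚ) / p.2} with hS
  have hN : a * b * n ^ 2 ≠ 0 := by positivity
  have heq : ∀ p ∈ S, 0 < p.1 ∧ 0 < p.2 ∧ m * (p.1 * p.2) = n * (a * p.2 + b * p.1) := by
    rintro ⟨x, y⟩ ⟨hx, hy, _, _, h⟩
    simp only at hx hy h ⊢
    refine ⟨hx, hy, ?_⟩
    have hx' : (x : ℚ) ≠ 0 := by positivity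
    have hy' : (y : ℚ) ≠ 0 := by positivity
    have hn' : (n : ℚ) ≠ 0 := by positivity
    field_simp at h
    have h2 : (m : ℚ) * (x * y) = n * (a * y + b * x) := by linarith
    exact_mod_cast h2
  have hlt : ∀ p ∈ S, n * a < m * p.1 ∧ n * b < m * p.2 := by
    rintro ⟨x, y⟩ hp
    obtain ⟨hx, hy, h⟩ := heq _ hp
    simp only at hx hy h ⊢
    have h1 : 0 < n * b * x := by positivity
    have h2 : 0 < n * a * y := by positivity
    constructor
    · apply Nat.lt_of_mul_lt_mul_right (a := y)
      nlinarith
    · apply Nat.lt_of_mul_lt_mul_right (a := x)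
      nlinarith
  have hmul : ∀ p ∈ S, (m * p.1 - n * a) * (m * p.2 - n * b) = a * b * n ^ 2 := by
    rintro ⟨x, y⟩ hp
    obtain ⟨hx, hy, h⟩ := heq _ hp
    obtain ⟨h1, h2⟩ := hlt _ hp
    simp only at hx hy h h1 h2 ⊢
    zify [h1.le, h2.le] at h ⊢
    linear_combination (m : ℤ) * h
  have hmaps : ∀ p ∈ S, m * p.1 - n * a ∈ ((a * b * n ^ 2).divisors : Set ℕ) := by
    intro p hp
    simp only [Finset.mem_coe, Nat.mem_divisors]
    exact ⟨⟨_, (hmul p hp).symm⟩, hN⟩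
  have hinj : Set.InjOn (fun p : ℕ × ℕ => m * p.1 - n * a) S := by
    intro p hp q hq hpq
    simp only at hpq
    have hp1 := hlt p hp
    have hq1 := hlt q hq
    have e1 : m * p.1 = m * q.1 := by omega
    have e2 : m * p.2 - n * b = m * q.2 - n * b := by
      have h1 := hmul p hp
      rw [hpq, ← hmul q hq] at h1
      exact Nat.eq_of_mul_eq_mul_left (by omega) h1
    have e3 : m * p.2 = m * q.2 := by omega
    exact Prod.ext (Nat.eq_of_mul_eq_mul_left hm e1) (Nat.eq_of_mul_eq_mul_left hm e3)
  refine ⟨Set.Finite.of_injOn hmaps hinj (Finset.finite_toSet _), ?_⟩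
  have hcard : S.ncard ≤ (a * b * n ^ 2).divisors.card := by
    rw [← Set.ncard_coe_finset]
    exact Set.ncard_le_ncard_of_injOn _ hmaps hinj (Finset.finite_toSet _)
  have hb1 : S.ncard ^ (2 * k) ≤ D * n ^ 2 := by
    refine (Nat.pow_le_pow_left hcard _).trans ((aux_divisor_bound _ hj _ hN).trans ?_)
    rw [hD, mul_assoc _ (a * b)]
  have hb2 : (S.ncard : ℝ) ^ (2 * k) ≤ D * (n : ℝ) ^ 2 := by exact_mod_cast hb1
  have hk' : (k : ℝ) ≠ 0 := by positivity
  apply le_of_pow_le_pow_left₀ hj.ne' (by positivity)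
  refine hb2.trans (le_of_eq ?_)
  rw [mul_pow, ← Real.rpow_natCast (_ ^ _), ← Real.rpow_natCast ((n : ℝ) ^ _),
    ← Real.rpow_mul (by positivity), ← Real.rpow_mul (by positivity)]
  have e1 : (1 : ℝ) / (2 * k) * ((2 * k : ℕ) : ℝ) = 1 := by push_cast; field_simp
  have e2 : (1 : ℝ) / k * ((2 * k : ℕ) : ℝ) = (2 : ℕ) := by push_cast; field_simp
  rw [e1, e2, Real.rpow_one, Real.rpow_natCast]
end
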